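/- Suppose Assumption 1 holds, X and Y are conditionally independent given Z, the J ≥ 1 locations (t_j)_{j=1}^J in 𝒳̈ × 𝒴 are fixed, Σ = E[u_1 u_1ᵀ] is invertible, and (δ_n) are positive reals with δ_n → 0. With Σ̂_n = (1/n)Σ_{i=1}^n u_i u_iᵀ, the normalized oracle statistic n·‖(Σ̂_n + δ_n·Id_J)^{−1/2} S_n‖_2^2 converges in distribution, as n → ∞, to the chi-square law χ²(J) with J degrees of freedom. -/

import Mathlib

open MeasureTheory ProbabilityTheory Filter Topology Asymptotics
open scoped RealInnerProductSpace

noncomputable section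

namespace CIPaper

/-- A positive definite kernel. -/
def PosDefKernel {D : Type*} (k : D → D → ℝ) : Prop :=
  ∀ (n : ℕ) (x : Fin n → D) (c : Fin n → ℝ),
    0 ≤ ∑ i : Fin n, ∑ j : Fin n, c i * c j * k (x i) (x j)

/-- The mean embedding of `ν` with respect to the kernel `k`. -/
def meanEmbed {D : Type*} [MeasurableSpace D] (k : D → D → ℝ) (ν : Measure D) (t : D) : ℝ :=
  ∫ x, k x t ∂ν

/-- A kernel is characteristic if the mean embedding is injective on probability measures. -/
def Characteristic {D : Type*} [MeasurableSpace D] (k : D → D → ℝ) : Prop :=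
  ∀ P Q : Measure D, IsProbabilityMeasure P → IsProbabilityMeasure Q →
    (∀ t, meanEmbed k P t = meanEmbed k Q t) → P = Q

def BoundedKernel {D : Type*} (k : D → D → ℝ) : Prop := ∃ C, ∀ x y, |k x y| ≤ C

/-- Assumption 1 of the paper, for the tensor product kernel built from `kX` and `kY` :
the tensor kernel is positive definite, characteristic, bounded, continuous and analytic. -/
structure Assumption1 {DX DY : Type*} [MeasurableSpace DX] [MeasurableSpace DY]
    [NormedAddCommGroup DX] [NormedSpace ℝ DX] [NormedAddCommGroup DY] [NormedSpace ℝ DY]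
    (kX : DX → DX → ℝ) (kY : DY → DY → ℝ) : Prop where
  posdef : PosDefKernel fun p q : DX × DY => kX p.1 q.1 * kY p.2 q.2
  charac : Characteristic fun p q : DX × DY => kX p.1 q.1 * kY p.2 q.2
  bounded : BoundedKernel fun p q : DX × DY => kX p.1 q.1 * kY p.2 q.2
  continuous : Continuous fun pq : (DX × DY) × (DX × DY) => kX pq.1.1 pq.2.1 * kY pq.1.2 pq.2.2
  analytic : ∀ p : DX × DY, AnalyticOnNhd ℝ (fun q : DX × DY => kX p.1 q.1 * kY p.2 q.2) Set.univ

/-- The random metric `d_{p,J}` between two measures, with locations `t`. -/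
def dpJ {D : Type*} [MeasurableSpace D] (k : D → D → ℝ) (p : ℕ) {J : ℕ}
    (t : Fin J → D) (P Q : Measure D) : ℝ :=
  ((J : ℝ)⁻¹ * ∑ j : Fin J, |meanEmbed k P (t j) - meanEmbed k Q (t j)| ^ p) ^ ((p : ℝ)⁻¹)

/-- `P` is the measure `P_{Ẍ⊗Y|Z}` of the paper : a Borel probability measure with
`P(A×B) = E[E[1_A(Ẍ)|Z]·E[1_B(Y)|Z]]` for all measurable `A`, `B`. -/
def IsCondProdMeasure {Ω : Type*} [MeasurableSpace Ω] (μ : Measure Ω)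
    {DX DZ DY : Type*} [MeasurableSpace DX] [MeasurableSpace DZ] [MeasurableSpace DY]
    (X : Ω → DX) (Z : Ω → DZ) (Y : Ω → DY) (P : Measure ((DX × DZ) × DY)) : Prop :=
  IsProbabilityMeasure P ∧
    ∀ (A : Set (DX × DZ)) (B : Set DY), MeasurableSet A → MeasurableSet B →
      (P (A ×ˢ B)).toReal =
        ∫ ω, ((μ[fun ω' => A.indicator (fun _ => (1 : ℝ)) (X ω', Z ω') |
                MeasurableSpace.comap Z inferInstance]) ω)
            * ((μ[fun ω' => B.indicator (fun _ => (1 : ℝ)) (Y ω') |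
                MeasurableSpace.comap Z inferInstance]) ω) ∂μ

/-- The witness function `Δ`. -/
def witness {Ω : Type*} [MeasurableSpace Ω] (μ : Measure Ω)
    {DX DZ DY : Type*} [MeasurableSpace DZ]
    (kX : DX × DZ → DX × DZ → ℝ) (kY : DY → DY → ℝ)
    (X : Ω → DX) (Z : Ω → DZ) (Y : Ω → DY) (t1 : DX × DZ) (t2 : DY) : ℝ :=
  ∫ ω, (kX t1 (X ω, Z ω) -
          (μ[fun ω' => kX t1 (X ω', Z ω') | MeasurableSpace.comap Z inferInstance]) ω)
      * (kY t2 (Y ω) -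
          (μ[fun ω' => kY t2 (Y ω') | MeasurableSpace.comap Z inferInstance]) ω) ∂μ

/-- Cramér–Wold characterization: `ν` is the centered Gaussian measure on `ℝ^J` with
covariance matrix `S`. -/
def IsCenteredGaussian {J : ℕ} (S : Matrix (Fin J) (Fin J) ℝ) (ν : Measure (Fin J → ℝ)) : Prop :=
  IsProbabilityMeasure ν ∧
    ∀ a : Fin J → ℝ,
      ν.map (fun v => ∑ j, a j * v j) =
        gaussianReal 0 (Real.toNNReal (∑ i, ∑ j, a i * S i j * a j))

/-- Convergence in distribution (weak convergence of the image laws). -/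
def TendstoInDistribution {Ω : Type*} [MeasurableSpace Ω] (μ : Measure Ω) {E : Type*}
    [TopologicalSpace E] [MeasurableSpace E] (W : ℕ → Ω → E) (ν : Measure E) : Prop :=
  ∀ f : BoundedContinuousFunction E ℝ,
    Tendsto (fun n : ℕ => ∫ ω, f (W n ω) ∂μ) atTop (𝓝 (∫ x, f x ∂ν))

/-- The one-sample statistic `u_i(j)` of the paper (oracle version), where `e1`, `e2` are
the conditional mean functions. -/
def uStat {Ω DX DZ DY : Type*} (kX : DX × DZ → DX × DZ → ℝ) (kY : DY → DY → ℝ)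
    (e1 : DX × DZ → DZ → ℝ) (e2 : DY → DZ → ℝ)
    (xS : ℕ → Ω → DX) (zS : ℕ → Ω → DZ) (yS : ℕ → Ω → DY)
    {J : ℕ} (t : Fin J → (DX × DZ) × DY) (i : ℕ) (j : Fin J) (ω : Ω) : ℝ :=
  (kX (t j).1 (xS i ω, zS i ω) - e1 (t j).1 (zS i ω)) *
    (kY (t j).2 (yS i ω) - e2 (t j).2 (zS i ω))

/-- `S_n`, the empirical mean of the `u_i`. -/
def SStat {Ω DX DZ DY : Type*} (kX : DX × DZ → DX × DZ → ℝ) (kY : DY → DY → ℝ)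
    (e1 : DX × DZ → DZ → ℝ) (e2 : DY → DZ → ℝ)
    (xS : ℕ → Ω → DX) (zS : ℕ → Ω → DZ) (yS : ℕ → Ω → DY)
    {J : ℕ} (t : Fin J → (DX × DZ) × DY) (n : ℕ) (ω : Ω) : Fin J → ℝ :=
  fun j => (n : ℝ)⁻¹ * ∑ i ∈ Finset.range n, uStat kX kY e1 e2 xS zS yS t i j ω

/-- The covariance matrix `Σ = E[u₁ u₁ᵀ]`. -/
def covMat {Ω DX DZ DY : Type*} [MeasurableSpace Ω] (μ : Measure Ω)
    (kX : DX × DZ → DX × DZ → ℝ) (kY : DY → DY → ℝ)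
    (e1 : DX × DZ → DZ → ℝ) (e2 : DY → DZ → ℝ)
    (xS : ℕ → Ω → DX) (zS : ℕ → Ω → DZ) (yS : ℕ → Ω → DY)
    {J : ℕ} (t : Fin J → (DX × DZ) × DY) : Matrix (Fin J) (Fin J) ℝ :=
  Matrix.of fun j j' =>
    ∫ ω, uStat kX kY e1 e2 xS zS yS t 0 j ω * uStat kX kY e1 e2 xS zS yS t 0 j' ω ∂μ

/-- The empirical covariance matrix `Σ̂_n` of the oracle `u_i`. -/
def covHat {Ω DX DZ DY : Type*} (kX : DX × DZ → DX × DZ → ℝ) (kY : DY → DY → ℝ)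
    (e1 : DX × DZ → DZ → ℝ) (e2 : DY → DZ → ℝ)
    (xS : ℕ → Ω → DX) (zS : ℕ → Ω → DZ) (yS : ℕ → Ω → DY)
    {J : ℕ} (t : Fin J → (DX × DZ) × DY) (n : ℕ) (ω : Ω) : Matrix (Fin J) (Fin J) ℝ :=
  Matrix.of fun j j' => (n : ℝ)⁻¹ * ∑ i ∈ Finset.range n,
    uStat kX kY e1 e2 xS zS yS t i j ω * uStat kX kY e1 e2 xS zS yS t i j' ω

/-- The regularized least squares estimator built from the first `r` samples `zs` with
targets `target`, kernel `kZ` and regularization parameter `lam`. -/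
def rls {DZ : Type*} (kZ : DZ → DZ → ℝ) (zs : ℕ → DZ) (target : ℕ → ℝ)
    (r : ℕ) (lam : ℝ) (z : DZ) : ℝ :=
  ∑ i : Fin r,
    (((Matrix.of fun i l : Fin r => kZ (zs i) (zs l)) +
        ((r : ℝ) * lam) • (1 : Matrix (Fin r) (Fin r) ℝ))⁻¹.mulVec
      fun i : Fin r => target i) i * kZ (zs i) z

/-- The statistic `ũ_{i,r}(j)` built from the RLS estimators. -/
def uTildeStat {Ω DX DZ DY : Type*} (kX : DX × DZ → DX × DZ → ℝ) (kY : DY → DY → ℝ)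
    {J : ℕ} (kZ1 kZ2 : Fin J → DZ → DZ → ℝ)
    (xS : ℕ → Ω → DX) (zS : ℕ → Ω → DZ) (yS : ℕ → Ω → DY)
    (t : Fin J → (DX × DZ) × DY) (r : ℕ) (lam : ℝ) (i : ℕ) (j : Fin J) (ω : Ω) : ℝ :=
  (kX (t j).1 (xS i ω, zS i ω) -
      rls (kZ1 j) (fun l => zS l ω) (fun l => kX (t j).1 (xS l ω, zS l ω)) r lam (zS i ω)) *
    (kY (t j).2 (yS i ω) -
      rls (kZ2 j) (fun l => zS l ω) (fun l => kY (t j).2 (yS l ω)) r lam (zS i ω))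

/-- `S̃_{n,r}`. -/
def STilde {Ω DX DZ DY : Type*} (kX : DX × DZ → DX × DZ → ℝ) (kY : DY → DY → ℝ)
    {J : ℕ} (kZ1 kZ2 : Fin J → DZ → DZ → ℝ)
    (xS : ℕ → Ω → DX) (zS : ℕ → Ω → DZ) (yS : ℕ → Ω → DY)
    (t : Fin J → (DX × DZ) × DY) (n r : ℕ) (lam : ℝ) (ω : Ω) : Fin J → ℝ :=
  fun j => (n : ℝ)⁻¹ * ∑ i ∈ Finset.range n,
    uTildeStat kX kY kZ1 kZ2 xS zS yS t r lam i j ω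

/-- `Σ_{n,r}`, the empirical covariance matrix of the `ũ_{i,r}`. -/
def covTilde {Ω DX DZ DY : Type*} (kX : DX × DZ → DX × DZ → ℝ) (kY : DY → DY → ℝ)
    {J : ℕ} (kZ1 kZ2 : Fin J → DZ → DZ → ℝ)
    (xS : ℕ → Ω → DX) (zS : ℕ → Ω → DZ) (yS : ℕ → Ω → DY)
    (t : Fin J → (DX × DZ) × DY) (n r : ℕ) (lam : ℝ) (ω : Ω) : Matrix (Fin J) (Fin J) ℝ :=
  Matrix.of fun j j' => (n : ℝ)⁻¹ * ∑ i ∈ Finset.range n,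
    uTildeStat kX kY kZ1 kZ2 xS zS yS t r lam i j ω *
      uTildeStat kX kY kZ1 kZ2 xS zS yS t r lam i j' ω

open scoped Classical in
/-- The inverse square root `M^{-1/2}` of a positive semidefinite matrix. -/
def invSqrtMat {J : ℕ} (M : Matrix (Fin J) (Fin J) ℝ) : Matrix (Fin J) (Fin J) ℝ :=
  if h : M.PosSemidef then
    ((h.1.eigenvectorUnitary : Matrix (Fin J) (Fin J) ℝ) *
      Matrix.diagonal ((RCLike.ofReal : ℝ → ℝ) ∘ Real.sqrt ∘ h.1.eigenvalues) *
      (star h.1.eigenvectorUnitary : Matrix (Fin J) (Fin J) ℝ))⁻¹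
  else 0

/-- The chi-square distribution with `J` degrees of freedom, realized as the law of the sum of
squares of `J` independent standard Gaussians. -/
def chiSq (J : ℕ) : Measure ℝ :=
  (Measure.pi fun _ : Fin J => gaussianReal 0 1).map fun v => ∑ j, v j ^ 2

/-- Assumption 2 of the paper for the operator `L` on `L²(P_Z)` :
`Tr((L + λ)⁻¹ L) ≤ Q λ^{-γ}`, the trace of the positive operator being computed in any
Hilbert basis. -/
def TraceAssumption {DZ : Type*} [MeasurableSpace DZ] (PZ : Measure DZ)
    (L : Lp ℝ 2 PZ →L[ℝ] Lp ℝ 2 PZ) (Q γ : ℝ) : Prop :=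
  ∀ lam : ℝ, 0 < lam → ∀ (ι : Type) (e : HilbertBasis ι ℝ (Lp ℝ 2 PZ)),
    ∑' i, ⟪(Ring.inverse (L + lam • (1 : Lp ℝ 2 PZ →L[ℝ] Lp ℝ 2 PZ)) * L) (e i), e i⟫ ≤
      Q * lam ^ (-γ)

/-- `P = L^s` : `P` is self-adjoint and acts as `c ^ s` on every eigenvector of `L`
(this determines the fractional power, via functional calculus, of a positive self-adjoint
compact operator). -/
def IsFracPower {H : Type*} [NormedAddCommGroup H] [InnerProductSpace ℝ H]
    (L : H →L[ℝ] H) (s : ℝ) (P : H →L[ℝ] H) : Prop :=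
  (∀ v w : H, ⟪P v, w⟫ = ⟪v, P w⟫) ∧
    ∀ (c : ℝ) (v : H), L v = c • v → P v = c ^ s • v

end CIPaper

open CIPaper

/-!
Conditional independence of `X` and `Y` given `Z` gives `E[k(t, Y) | Z, X] = E[k(t, Y) | Z]`, so
the second residual has conditional mean zero given `(Z, X)`, while the first is a function of
`(Z, X)`. Hence the `uᵢ` are i.i.d. and centred, with covariance `Σ`. Since
`‖M^{-1/2} v‖² = vᵀ M⁻¹ v`, the statistic is `wᵀ (Σ̂ₙ + δₙ Id)⁻¹ w` with `w = √n Sₙ`. The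
multivariate central limit theorem, reduced to dimension one by characteristic functions, sends `w`
to `N(0, Σ)`; the law of large numbers sends `(Σ̂ₙ + δₙ Id)⁻¹` to `Σ⁻¹`; and by Slutsky's theorem
the limit is the law of `gᵀ Σ⁻¹ g` for `g ∼ N(0, Σ)`, which is `χ²(J)` because `g = Σ^{1/2} ξ` with
`ξ` standard Gaussian.
-/

namespace CIPaper

open scoped Matrix MatrixOrder ENNReal

section MatrixSqrt

variable {ι : Type*} [Fintype ι] [DecidableEq ι]

lemma sqrt_mulVec_dotProduct_self {A : Matrix ι ι ℝ} (hA : A.PosSemidef) (v : ι → ℝ) :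
    (CFC.sqrt A *ᵥ v) ⬝ᵥ (CFC.sqrt A *ᵥ v) = v ⬝ᵥ A *ᵥ v := by
  have hsymm : (CFC.sqrt A)ᵀ = CFC.sqrt A :=
    Matrix.isHermitian_iff_isSymm.1
      (Matrix.nonneg_iff_posSemidef.1 (CFC.sqrt_nonneg A)).isHermitian
  rw [Matrix.dotProduct_mulVec, ← Matrix.mulVec_transpose, hsymm, Matrix.mulVec_mulVec,
    CFC.sqrt_mul_sqrt_self A hA.nonneg, dotProduct_comm]

lemma sqrt_mulVec_dotProduct_inv_mulVec {A : Matrix ι ι ℝ} (hA : A.PosSemidef)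
    (hAu : IsUnit A) (v : ι → ℝ) :
    (CFC.sqrt A *ᵥ v) ⬝ᵥ A⁻¹ *ᵥ (CFC.sqrt A *ᵥ v) = v ⬝ᵥ v := by
  have hsqrt : IsUnit (CFC.sqrt A).det := by
    rw [← Matrix.isUnit_iff_isUnit_det]
    exact (CFC.isUnit_sqrt_iff A hA.nonneg).2 hAu
  rw [← sqrt_mulVec_dotProduct_self hA.inv, ← hA.inv_sqrt, Matrix.mulVec_mulVec,
    Matrix.nonsing_inv_mul _ hsqrt, Matrix.one_mulVec]

lemma invSqrtMat_eq_sqrt_inv {J : ℕ} {M : Matrix (Fin J) (Fin J) ℝ} (hM : M.PosSemidef) :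
    invSqrtMat M = CFC.sqrt M⁻¹ := by
  rw [invSqrtMat, dif_pos hM, ← hM.inv_sqrt, CFC.sqrt_eq_real_sqrt M hM.nonneg,
    cfcₙ_eq_cfc, hM.isHermitian.cfc_eq, Matrix.IsHermitian.cfc, Unitary.conjStarAlgAut_apply]

lemma sum_sq_invSqrtMat_mulVec {J : ℕ} {M : Matrix (Fin J) (Fin J) ℝ} (hM : M.PosSemidef)
    (v : Fin J → ℝ) : ∑ j, (invSqrtMat M *ᵥ v) j ^ 2 = v ⬝ᵥ M⁻¹ *ᵥ v := by
  rw [← sqrt_mulVec_dotProduct_self hM.inv, ← invSqrtMat_eq_sqrt_inv hM]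
  simp only [dotProduct, sq]

lemma mul_sum_sq_invSqrtMat_mulVec {J : ℕ} {M : Matrix (Fin J) (Fin J) ℝ} (hM : M.PosSemidef)
    {c : ℝ} (hc : 0 ≤ c) (v : Fin J → ℝ) :
    c * ∑ j, (invSqrtMat M *ᵥ v) j ^ 2 = (√c • v) ⬝ᵥ M⁻¹ *ᵥ (√c • v) := by
  rw [sum_sq_invSqrtMat_mulVec hM, Matrix.mulVec_smul, smul_dotProduct, dotProduct_smul,
    smul_smul, Real.mul_self_sqrt hc, smul_eq_mul]

lemma map_dotProduct_inv_mulVec_multivariateGaussian {J : ℕ} {S : Matrix (Fin J) (Fin J) ℝ}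
    (hS : S.PosSemidef) (hSu : IsUnit S) :
    (multivariateGaussian 0 S).map (fun x : EuclideanSpace ℝ (Fin J) => x ⬝ᵥ S⁻¹ *ᵥ x) =
      chiSq J := by
  have hquad : (fun v => ∑ j, v j ^ 2) =
      (fun x : EuclideanSpace ℝ (Fin J) => x ⬝ᵥ S⁻¹ *ᵥ x) ∘
        (fun x => 0 + Matrix.toEuclideanCLM (𝕜 := ℝ) (CFC.sqrt S) x) ∘ WithLp.toLp 2 := by
    ext v
    simpa [dotProduct, sq] using (sqrt_mulVec_dotProduct_inv_mulVec hS hSu v).symm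
  rw [chiSq, hquad, multivariateGaussian, ← map_pi_eq_stdGaussian,
    Measure.map_map (by fun_prop) (by fun_prop), Measure.map_map (by fun_prop) (by fun_prop)]
  rfl

end MatrixSqrt

section MatrixInverse

instance instMeasurableSpaceMatrix {m n α : Type*} [MeasurableSpace α] :
    MeasurableSpace (Matrix m n α) :=
  inferInstanceAs (MeasurableSpace (m → n → α))

instance instBorelSpaceMatrix {m n α : Type*} [Countable m] [Countable n] [TopologicalSpace α]
    [SecondCountableTopology α] [MeasurableSpace α] [BorelSpace α] :
    BorelSpace (Matrix m n α) :=
  inferInstanceAs (BorelSpace (m → n → α))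

instance instSecondCountableTopologyMatrix {m n α : Type*} [Countable m] [Countable n]
    [TopologicalSpace α] [SecondCountableTopology α] : SecondCountableTopology (Matrix m n α) :=
  inferInstanceAs (SecondCountableTopology (m → n → α))

variable {ι : Type*} [Fintype ι] [DecidableEq ι]

lemma measurable_matrix_inv : Measurable fun A : Matrix ι ι ℝ => A⁻¹ := by
  simp only [Matrix.inv_def, Ring.inverse_eq_inv']
  have hdet : Measurable fun A : Matrix ι ι ℝ => A.det := continuous_id.matrix_det.measurable
  have hadj : Measurable fun A : Matrix ι ι ℝ => A.adjugate :=
    continuous_id.matrix_adjugate.measurable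
  exact hdet.inv.smul hadj

lemma continuousAt_matrix_inv_of_isUnit {A : Matrix ι ι ℝ} (hA : IsUnit A) :
    ContinuousAt (fun A : Matrix ι ι ℝ => A⁻¹) A := by
  obtain ⟨u, hu⟩ := (Matrix.isUnit_iff_isUnit_det A).1 hA
  exact continuousAt_matrix_inv A (hu ▸ NormedRing.inverse_continuousAt u)

end MatrixInverse

section CentralLimit

variable {Ω Ω' E : Type*} [MeasurableSpace Ω] [MeasurableSpace Ω'] {P : Measure Ω}
  {P' : Measure Ω'} [NormedAddCommGroup E] [InnerProductSpace ℝ E] [MeasurableSpace E]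
  [BorelSpace E]

lemma charFun_map_eq_charFun_map_inner {X : Ω → E} (hX : AEMeasurable X P) (t : E) :
    charFun (P.map X) t = charFun (P.map fun ω => ⟪t, X ω⟫) 1 := by
  rw [charFun_eq_charFunDual_toDualMap, charFunDual_eq_charFun_map_one,
    AEMeasurable.map_map_of_aemeasurable (by fun_prop) hX]
  rfl

variable [IsProbabilityMeasure P] [IsProbabilityMeasure P'] [FiniteDimensional ℝ E]

theorem tendstoInDistribution_of_forall_inner {X : ℕ → Ω → E} {G : Ω' → E}
    (hX : ∀ n, AEMeasurable (X n) P) (hG : AEMeasurable G P')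
    (h : ∀ t, MeasureTheory.TendstoInDistribution (fun n ω => ⟪t, X n ω⟫) atTop
      (fun ω => ⟪t, G ω⟫) (fun _ => P) P') :
    MeasureTheory.TendstoInDistribution X atTop G (fun _ => P) P' where
  forall_aemeasurable := hX
  aemeasurable_limit := hG
  tendsto := by
    refine ProbabilityMeasure.tendsto_iff_tendsto_charFun.2 fun t => ?_
    have ht := ProbabilityMeasure.tendsto_iff_tendsto_charFun.1 (h t).tendsto 1
    simpa only [ProbabilityMeasure.coe_mk, charFun_map_eq_charFun_map_inner (hX _),
      charFun_map_eq_charFun_map_inner hG] using ht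

theorem tendstoInDistribution_inv_sqrt_smul_sum_sub {X : ℕ → Ω → E} {G : Ω' → E}
    (hG : HasGaussianLaw G P') (hG0 : P'[G] = 0)
    (hvar : ∀ t, Var[fun ω => ⟪t, G ω⟫; P'] = Var[fun ω => ⟪t, X 0 ω⟫; P])
    (hX : MemLp (X 0) 2 P) (hindep : iIndepFun X P) (hident : ∀ i, IdentDistrib (X i) (X 0) P P) :
    MeasureTheory.TendstoInDistribution
      (fun (n : ℕ) ω => (√n)⁻¹ • (∑ k ∈ Finset.range n, X k ω - (n : ℝ) • P[X 0])) atTop G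
      (fun _ => P) P' := by
  have hXm : ∀ i, AEMeasurable (X i) P := fun i => (hident i).aemeasurable_fst
  refine tendstoInDistribution_of_forall_inner (by fun_prop) hG.aemeasurable fun t => ?_
  have hinner : Measurable fun x : E => ⟪t, x⟫ := by fun_prop
  have hmeanG : ∫ ω, ⟪t, G ω⟫ ∂P' = 0 := by
    rw [integral_inner hG.integrable, hG0, inner_zero_right]
  have hlawG : HasLaw (fun ω => ⟪t, G ω⟫)
      (gaussianReal 0 Var[fun ω => ⟪t, X 0 ω⟫; P].toNNReal) P' := by
    refine ⟨hinner.comp_aemeasurable hG.aemeasurable, ?_⟩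
    have hgauss : HasGaussianLaw (fun ω => ⟪t, G ω⟫) P' := hG.map_fun (innerSL ℝ t)
    rw [hgauss.map_eq_gaussianReal, hmeanG, hvar]
  have hclt := tendstoInDistribution_inv_sqrt_mul_sum_sub (X := fun i ω => ⟪t, X i ω⟫) hlawG
    (hX.const_inner t) (hindep.comp (fun _ x => ⟪t, x⟫) fun _ => hinner)
    fun i => (hident i).comp hinner
  simpa only [real_inner_smul_right, inner_sub_right, inner_sum,
    integral_inner (hX.integrable one_le_two)] using hclt

end CentralLimit

section SecondMoment

/-- The sample average of `V 0, …, V (n - 1)`, with value `0` for the empty sample `n = 0`. -/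
def empiricalMean {Ω E : Type*} [AddCommGroup E] [Module ℝ E] (V : ℕ → Ω → E) (n : ℕ) (ω : Ω) : E :=
  (n : ℝ)⁻¹ • ∑ i ∈ Finset.range n, V i ω

/-- The uncentred second moment matrix `E[V Vᵀ]` of a random vector `V`. -/
def secondMoment {Ω ι : Type*} [MeasurableSpace Ω] (μ : Measure Ω) (V : Ω → EuclideanSpace ℝ ι) :
    Matrix ι ι ℝ :=
  Matrix.of fun j k => ∫ ω, V ω j * V ω k ∂μ

/-- The uncentred empirical second moment matrix, the sample average of the `V i (V i)ᵀ`. -/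
def empiricalSecondMoment {Ω ι : Type*} (V : ℕ → Ω → EuclideanSpace ℝ ι) (n : ℕ) (ω : Ω) :
    Matrix ι ι ℝ :=
  empiricalMean (fun i ω => Matrix.vecMulVec (V i ω) (V i ω)) n ω

variable {Ω ι : Type*}

lemma posSemidef_empiricalSecondMoment [Finite ι] (V : ℕ → Ω → EuclideanSpace ℝ ι) (n : ℕ) (ω : Ω) :
    (empiricalSecondMoment V n ω).PosSemidef :=
  (Matrix.posSemidef_sum _ fun i _ => Matrix.posSemidef_vecMulVec_self_star (V i ω)).smul
    (by positivity)

variable [MeasurableSpace Ω] {μ : Measure Ω}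

lemma aemeasurable_empiricalSecondMoment [Finite ι] {V : ℕ → Ω → EuclideanSpace ℝ ι}
    (hV : ∀ i, AEMeasurable (V i) μ) (n : ℕ) : AEMeasurable (empiricalSecondMoment V n) μ := by
  have houter : Measurable fun v : EuclideanSpace ℝ ι => Matrix.vecMulVec v v := by
    refine Continuous.measurable ?_
    fun_prop
  exact (Finset.aemeasurable_fun_sum _ fun i _ =>
    houter.comp_aemeasurable (hV i)).const_smul (n : ℝ)⁻¹

variable [Fintype ι]

lemma dotProduct_secondMoment_mulVec {V : Ω → EuclideanSpace ℝ ι} (hV : MemLp V 2 μ)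
    (a : EuclideanSpace ℝ ι) : a ⬝ᵥ secondMoment μ V *ᵥ a = ∫ ω, ⟪a, V ω⟫ ^ 2 ∂μ := by
  have hprod_int : ∀ j k, Integrable (fun ω => a j * a k * (V ω j * V ω k)) μ := fun j k =>
    ((hV.eval_piLp j).integrable_mul (hV.eval_piLp k)).const_mul _
  calc a ⬝ᵥ secondMoment μ V *ᵥ a
      = ∑ j, ∑ k, ∫ ω, a j * a k * (V ω j * V ω k) ∂μ := by
        simp only [dotProduct, Matrix.mulVec, secondMoment, Matrix.of_apply, Finset.mul_sum,
          integral_const_mul]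
        exact Finset.sum_congr rfl fun j _ => Finset.sum_congr rfl fun k _ => by ring
    _ = ∫ ω, ∑ j, ∑ k, a j * a k * (V ω j * V ω k) ∂μ := by
        rw [integral_finsetSum _ fun j _ => integrable_finsetSum _ fun k _ => hprod_int j k]
        exact Finset.sum_congr rfl fun j _ => (integral_finsetSum _ fun k _ => hprod_int j k).symm
    _ = ∫ ω, ⟪a, V ω⟫ ^ 2 ∂μ := by
        refine integral_congr_ae (ae_of_all _ fun ω => ?_)
        simp only [PiLp.inner_apply, RCLike.inner_apply, conj_trivial, sq, Finset.sum_mul_sum]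
        exact Finset.sum_congr rfl fun j _ => Finset.sum_congr rfl fun k _ => by ring

lemma posSemidef_secondMoment {V : Ω → EuclideanSpace ℝ ι} (hV : MemLp V 2 μ) :
    (secondMoment μ V).PosSemidef := by
  refine .of_dotProduct_mulVec_nonneg ?_ fun a => ?_
  · ext j k
    simp only [Matrix.conjTranspose_apply, secondMoment, Matrix.of_apply, star_trivial, mul_comm]
  · rw [star_trivial]
    exact (integral_nonneg fun ω => sq_nonneg ⟪WithLp.toLp 2 a, V ω⟫).trans_eq
      (dotProduct_secondMoment_mulVec hV (WithLp.toLp 2 a)).symm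

lemma variance_inner_of_integral_eq_zero [IsFiniteMeasure μ] {V : Ω → EuclideanSpace ℝ ι}
    (hV : MemLp V 2 μ) (h0 : μ[V] = 0) (a : EuclideanSpace ℝ ι) :
    Var[fun ω => ⟪a, V ω⟫; μ] = a ⬝ᵥ secondMoment μ V *ᵥ a := by
  have hmean : ∫ ω, ⟪a, V ω⟫ ∂μ = 0 := by
    rw [integral_inner (hV.integrable one_le_two), h0, inner_zero_right]
  rw [variance_of_integral_eq_zero (hV.const_inner a).aemeasurable hmean,
    dotProduct_secondMoment_mulVec hV]

variable {V : ℕ → Ω → EuclideanSpace ℝ ι}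

lemma tendsto_empiricalSecondMoment_ae (hV : MemLp (V 0) 2 μ) (hindep : iIndepFun V μ)
    (hident : ∀ i, IdentDistrib (V i) (V 0) μ μ) :
    ∀ᵐ ω ∂μ, Tendsto (fun n => empiricalSecondMoment V n ω) atTop (𝓝 (secondMoment μ (V 0))) := by
  have hentry : ∀ j k, ∀ᵐ ω ∂μ, Tendsto (fun n => empiricalSecondMoment V n ω j k) atTop
      (𝓝 (secondMoment μ (V 0) j k)) := fun j k => by
    have hprod : Measurable fun v : EuclideanSpace ℝ ι => v j * v k := by fun_prop
    simpa only [empiricalSecondMoment, empiricalMean, Matrix.smul_apply, Matrix.sum_apply,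
        Matrix.vecMulVec_apply, secondMoment, Matrix.of_apply] using
      strong_law_ae (fun i ω => V i ω j * V i ω k)
      ((hV.eval_piLp j).integrable_mul (hV.eval_piLp k))
      (fun i i' hii => (hindep.indepFun hii).comp hprod hprod) fun i => (hident i).comp hprod
  filter_upwards [ae_all_iff.2 fun j => ae_all_iff.2 (hentry j)] with ω hω
  exact tendsto_pi_nhds.2 fun j => tendsto_pi_nhds.2 (hω j)

variable [DecidableEq ι] [IsProbabilityMeasure μ]

lemma tendstoInDistribution_sqrt_smul_empiricalMean (hV : MemLp (V 0) 2 μ) (h0 : μ[V 0] = 0)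
    (hindep : iIndepFun V μ) (hident : ∀ i, IdentDistrib (V i) (V 0) μ μ) :
    MeasureTheory.TendstoInDistribution (fun (n : ℕ) ω => √n • empiricalMean V n ω) atTop id
      (fun _ => μ) (multivariateGaussian 0 (secondMoment μ (V 0))) := by
  have hvar : ∀ a : EuclideanSpace ℝ ι,
      Var[fun x => ⟪a, id x⟫; multivariateGaussian 0 (secondMoment μ (V 0))] =
        Var[fun ω => ⟪a, V 0 ω⟫; μ] := fun a => by
    rw [variance_inner_of_integral_eq_zero hV h0,
      ← covarianceBilin_multivariateGaussian (posSemidef_secondMoment hV),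
      covarianceBilin_self IsGaussian.memLp_two_id]
    rfl
  have hclt := tendstoInDistribution_inv_sqrt_smul_sum_sub IsGaussian.hasGaussianLaw_id
    integral_id_multivariateGaussian' hvar hV hindep hident
  simpa only [empiricalMean, smul_smul, ← div_eq_mul_inv, Real.sqrt_div_self, one_div, h0,
    smul_zero, sub_zero] using hclt

end SecondMoment

section Studentization

variable {Ω Ω' ι : Type*} [MeasurableSpace Ω] [MeasurableSpace Ω'] {μ : Measure Ω}
  [IsProbabilityMeasure μ] {P' : Measure Ω'} [IsProbabilityMeasure P'] [Fintype ι]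
  [DecidableEq ι]

theorem tendstoInDistribution_dotProduct_inv_mulVec {W : ℕ → Ω → EuclideanSpace ℝ ι}
    {G : Ω' → EuclideanSpace ℝ ι} {M : ℕ → Ω → Matrix ι ι ℝ} {S : Matrix ι ι ℝ}
    (hW : MeasureTheory.TendstoInDistribution W atTop G (fun _ => μ) P')
    (hMm : ∀ n, AEMeasurable (M n) μ)
    (hM : ∀ᵐ ω ∂μ, Tendsto (fun n => M n ω) atTop (𝓝 S)) (hS : IsUnit S) :
    MeasureTheory.TendstoInDistribution (fun n ω => W n ω ⬝ᵥ (M n ω)⁻¹ *ᵥ W n ω) atTop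
      (fun ω => G ω ⬝ᵥ S⁻¹ *ᵥ G ω) (fun _ => μ) P' := by
  -- Convergence in measure needs a metric on the target, which `Matrix` lacks by default.
  have hinvm : ∀ n, AEMeasurable (fun ω => Matrix.of.symm (M n ω)⁻¹) μ := fun n =>
    measurable_matrix_inv.comp_aemeasurable (hMm n)
  have hinv : TendstoInMeasure μ (fun n ω => Matrix.of.symm (M n ω)⁻¹) atTop
      fun _ => Matrix.of.symm S⁻¹ := by
    refine tendstoInMeasure_of_tendsto_ae (fun n => (hinvm n).aestronglyMeasurable) ?_
    filter_upwards [hM] with ω hω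
    exact (continuousAt_matrix_inv_of_isUnit hS).tendsto.comp hω
  have hquad : Continuous fun p : EuclideanSpace ℝ ι × (ι → ι → ℝ) =>
      p.1 ⬝ᵥ Matrix.of p.2 *ᵥ p.1 := by
    fun_prop
  exact hW.continuous_comp_prodMk_of_tendstoInMeasure_const hquad hinv hinvm

lemma tendstoInDistribution_of_map_eq {E : Type*} [TopologicalSpace E] [MeasurableSpace E]
    [BorelSpace E] {W : ℕ → Ω → E} {G : Ω' → E} {ν : Measure E}
    (hW : MeasureTheory.TendstoInDistribution W atTop G (fun _ => μ) P') (hG : P'.map G = ν) :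
    TendstoInDistribution μ W ν := fun f => by
  subst hG
  have hf := ProbabilityMeasure.tendsto_iff_forall_integral_tendsto.1 hW.tendsto f
  simpa only [ProbabilityMeasure.coe_mk,
    integral_map (hW.forall_aemeasurable _) f.continuous.aestronglyMeasurable] using hf

theorem tendstoInDistribution_chiSq_of_iid {J : ℕ} {V : ℕ → Ω → EuclideanSpace ℝ (Fin J)}
    (hV : MemLp (V 0) 2 μ) (h0 : μ[V 0] = 0) (hindep : iIndepFun V μ)
    (hident : ∀ i, IdentDistrib (V i) (V 0) μ μ) (hunit : IsUnit (secondMoment μ (V 0)))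
    {δ : ℕ → ℝ} (hδnonneg : ∀ n, 0 ≤ δ n) (hδ : Tendsto δ atTop (𝓝 0)) :
    TendstoInDistribution μ (fun n ω => n * ∑ j, (invSqrtMat (empiricalSecondMoment V n ω +
      δ n • (1 : Matrix (Fin J) (Fin J) ℝ)) *ᵥ (empiricalMean V n ω).ofLp) j ^ 2) (chiSq J) := by
  have hpos : ∀ n ω, (empiricalSecondMoment V n ω +
      δ n • (1 : Matrix (Fin J) (Fin J) ℝ)).PosSemidef := fun n ω =>
    (posSemidef_empiricalSecondMoment V n ω).add (Matrix.PosSemidef.one.smul (hδnonneg n))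
  simp only [mul_sum_sq_invSqrtMat_mulVec (hpos _ _) (Nat.cast_nonneg _)]
  refine tendstoInDistribution_of_map_eq (tendstoInDistribution_dotProduct_inv_mulVec
    (tendstoInDistribution_sqrt_smul_empiricalMean hV h0 hindep hident) (fun n => ?_) ?_ hunit)
    (map_dotProduct_inv_mulVec_multivariateGaussian (posSemidef_secondMoment hV) hunit)
  · exact (aemeasurable_empiricalSecondMoment (fun i => (hident i).aemeasurable_fst) n).add_const _
  · filter_upwards [tendsto_empiricalSecondMoment_ae hV hindep hident] with ω hω
    simpa only [zero_smul, add_zero] using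
      hω.add (hδ.smul_const (1 : Matrix (Fin J) (Fin J) ℝ))

end Studentization

section ConditionalMean

lemma stronglyMeasurable_comap_comp {α β : Type*} [mβ : MeasurableSpace β] {g : β → ℝ}
    (hg : Measurable g) (T : α → β) :
    StronglyMeasurable[MeasurableSpace.comap T mβ] fun a => g (T a) :=
  (hg.comp (comap_measurable T)).stronglyMeasurable

variable {Ω DX DZ : Type*} [mΩ : MeasurableSpace Ω] {μ : Measure Ω}

lemma memLp_sub_condExp {m : MeasurableSpace Ω} {p : ℝ≥0∞} (hp : 1 ≤ p)
    {f e : Ω → ℝ} (hf : MemLp f p μ) (he : e =ᵐ[μ] μ[f | m]) : MemLp (f - e) p μ :=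
  hf.sub ((memLp_congr_ae he).2 (hf.condExp hp))

variable [IsFiniteMeasure μ]

lemma integral_mul_eq_zero_of_condExp_eq_zero {m : MeasurableSpace Ω} (hm : m ≤ mΩ)
    {f g : Ω → ℝ} (hf : StronglyMeasurable[m] f) (hg : Integrable g μ)
    (hfg : Integrable (f * g) μ) (hg0 : μ[g | m] =ᵐ[μ] 0) : ∫ ω, (f * g) ω ∂μ = 0 := by
  have hpull := condExp_mul_of_stronglyMeasurable_left hf hfg hg
  rw [← integral_condExp hm]
  refine integral_eq_zero_of_ae ?_
  filter_upwards [hpull, hg0] with ω hω hω0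
  rw [hω, Pi.mul_apply, hω0, Pi.zero_apply, mul_zero]

variable [StandardBorelSpace Ω] [MeasurableSpace DX] [StandardBorelSpace DX]
  [MeasurableSpace DZ] {X : Ω → DX} {Z : Ω → DZ}

lemma condExp_comap_prodMk_ae_eq_of_condIndepFun {W : Ω → ℝ} (hX : Measurable X)
    (hZ : Measurable Z) (hW : Measurable W) (hWint : Integrable W μ)
    (hindep : CondIndepFun (MeasurableSpace.comap Z inferInstance) hZ.comap_le X W μ) :
    μ[W | MeasurableSpace.comap (fun ω => (Z ω, X ω)) inferInstance] =ᵐ[μ]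
      μ[W | MeasurableSpace.comap Z inferInstance] := by
  have hZX : Measurable fun ω => (Z ω, X ω) := hZ.prodMk hX
  obtain hΩ | hΩ := isEmpty_or_nonempty Ω
  · exact Filter.Eventually.of_forall fun ω => hΩ.elim ω
  have : Nonempty DX := hΩ.map X
  have hkernel := ae_of_ae_map hZX.aemeasurable
    ((condIndepFun_iff_condDistrib_prod_ae_eq_prodMkRight hW hX hZ).1 hindep)
  filter_upwards [hkernel,
    condExp_ae_eq_integral_condDistrib hZX hW.aemeasurable stronglyMeasurable_id hWint,
    condExp_ae_eq_integral_condDistrib hZ hW.aemeasurable stronglyMeasurable_id hWint]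
    with ω hω hωZX hωZ
  exact hωZX.trans (by rw [hω, Kernel.prodMkRight_apply]; exact hωZ.symm)

lemma condExp_residual_ae_eq_zero_of_condIndepFun {W : Ω → ℝ} {e : DZ → ℝ} (hX : Measurable X)
    (hZ : Measurable Z) (hW : Measurable W) (he : Measurable e) (hWint : Integrable W μ)
    (hmean : (fun ω => e (Z ω)) =ᵐ[μ] μ[W | MeasurableSpace.comap Z inferInstance])
    (hindep : CondIndepFun (MeasurableSpace.comap Z inferInstance) hZ.comap_le X W μ) :
    μ[fun ω => W ω - e (Z ω) | MeasurableSpace.comap (fun ω => (Z ω, X ω)) inferInstance]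
      =ᵐ[μ] 0 := by
  have heint : Integrable (fun ω => e (Z ω)) μ := integrable_condExp.congr hmean.symm
  have hemeas : StronglyMeasurable[MeasurableSpace.comap (fun ω => (Z ω, X ω)) inferInstance]
      fun ω => e (Z ω) := stronglyMeasurable_comap_comp (he.comp measurable_fst) _
  filter_upwards [hmean,
    condExp_sub hWint heint (MeasurableSpace.comap (fun ω => (Z ω, X ω)) inferInstance),
    condExp_comap_prodMk_ae_eq_of_condIndepFun hX hZ hW hWint hindep] with ω hω hsub hωZX
  rw [condExp_of_stronglyMeasurable (hZ.prodMk hX).comap_le hemeas heint] at hsub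
  exact hsub.trans (by rw [Pi.sub_apply, hωZX, hω, sub_self, Pi.zero_apply])

lemma integral_residual_mul_residual_eq_zero {W : Ω → ℝ} {f : DX × DZ → ℝ} {e₁ e₂ : DZ → ℝ}
    (hX : Measurable X) (hZ : Measurable Z) (hW : Measurable W) (hf : Measurable f)
    (he₁ : Measurable e₁) (he₂ : Measurable e₂) (hWint : Integrable W μ)
    (hprod_int : Integrable (fun ω => (f (X ω, Z ω) - e₁ (Z ω)) * (W ω - e₂ (Z ω))) μ)
    (hmean : (fun ω => e₂ (Z ω)) =ᵐ[μ] μ[W | MeasurableSpace.comap Z inferInstance])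
    (hindep : CondIndepFun (MeasurableSpace.comap Z inferInstance) hZ.comap_le X W μ) :
    ∫ ω, (f (X ω, Z ω) - e₁ (Z ω)) * (W ω - e₂ (Z ω)) ∂μ = 0 := by
  have hfun : Measurable fun p : DZ × DX => f (p.2, p.1) - e₁ p.1 := by fun_prop
  exact integral_mul_eq_zero_of_condExp_eq_zero (hZ.prodMk hX).comap_le
    (stronglyMeasurable_comap_comp hfun fun ω => (Z ω, X ω))
    (hWint.sub (integrable_condExp.congr hmean.symm)) hprod_int
    (condExp_residual_ae_eq_zero_of_condIndepFun hX hZ hW he₂ hWint hmean hindep)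

end ConditionalMean

section KernelFactors

variable {DX DY : Type*} [MeasurableSpace DX] [MeasurableSpace DY] [NormedAddCommGroup DX]
  [NormedSpace ℝ DX] [NormedAddCommGroup DY] [NormedSpace ℝ DY] [MeasurableSingletonClass DX]
  [MeasurableSingletonClass DY] [Nontrivial DX] {kX : DX → DX → ℝ} {kY : DY → DY → ℝ}

-- A vanishing kernel would not separate two distinct Dirac masses.
lemma Assumption1.exists_ne_zero (hk : Assumption1 kX kY) :
    (∃ x x', kX x x' ≠ 0) ∧ ∃ y y', kY y y' ≠ 0 := by
  obtain ⟨p, q, hpq⟩ : ∃ p q : DX × DY, kX p.1 q.1 * kY p.2 q.2 ≠ 0 := by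
    by_contra! hzero
    obtain ⟨x, hx⟩ := exists_ne (0 : DX)
    have hdirac : Measure.dirac ((0 : DX), (0 : DY)) = Measure.dirac (x, 0) :=
      hk.charac _ _ inferInstance inferInstance fun t => by simp only [meanEmbed, hzero]; simp
    exact hx (congrArg Prod.fst (dirac_eq_dirac_iff.1 hdirac)).symm
  exact ⟨⟨_, _, left_ne_zero_of_mul hpq⟩, _, _, right_ne_zero_of_mul hpq⟩

lemma Assumption1.boundedKernel_left (hk : Assumption1 kX kY) : BoundedKernel kX := by
  obtain ⟨-, y, y', hy⟩ := hk.exists_ne_zero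
  obtain ⟨C, hC⟩ := hk.bounded
  refine ⟨C / |kY y y'|, fun x x' => ?_⟩
  rw [le_div_iff₀ (abs_pos.2 hy), ← abs_mul]
  exact hC (x, y) (x', y')

lemma Assumption1.boundedKernel_right (hk : Assumption1 kX kY) : BoundedKernel kY := by
  obtain ⟨⟨x, x', hx⟩, -⟩ := hk.exists_ne_zero
  obtain ⟨C, hC⟩ := hk.bounded
  refine ⟨C / |kX x x'|, fun y y' => ?_⟩
  rw [le_div_iff₀ (abs_pos.2 hx), ← abs_mul, mul_comm]
  exact hC (x, y) (x', y')

lemma Assumption1.continuous_left (hk : Assumption1 kX kY) (x : DX) : Continuous (kX x) := by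
  obtain ⟨-, y, y', hy⟩ := hk.exists_ne_zero
  have hprod : Continuous fun x' => kX x x' * kY y y' :=
    hk.continuous.comp (f := fun x' => ((x, y), (x', y'))) (by fun_prop)
  simpa only [mul_div_cancel_right₀ _ hy] using hprod.div_const (kY y y')

lemma Assumption1.continuous_right (hk : Assumption1 kX kY) (y : DY) : Continuous (kY y) := by
  obtain ⟨⟨x, x', hx⟩, -⟩ := hk.exists_ne_zero
  have hprod : Continuous fun y' => kX x x' * kY y y' :=
    hk.continuous.comp (f := fun y' => ((x, y), (x', y'))) (by fun_prop)
  simpa only [mul_div_cancel_left₀ _ hx] using hprod.div_const (kX x x')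

end KernelFactors

lemma BoundedKernel.memLp_comp {Ω D : Type*} [MeasurableSpace Ω] [MeasurableSpace D]
    {μ : Measure Ω} [IsFiniteMeasure μ] {k : D → D → ℝ} (hk : BoundedKernel k) {x : D}
    (hkx : Measurable (k x)) {T : Ω → D} (hT : Measurable T) (p : ℝ≥0∞) :
    MemLp (fun ω => k x (T ω)) p μ := by
  obtain ⟨C, hC⟩ := hk
  exact .of_bound (hkx.comp hT).aestronglyMeasurable C (ae_of_all _ fun ω => hC x (T ω))

section ResidualProduct

/-- The vector `u` of the paper as a function of one observation `((x, z), y)`: its `j`-th entry is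
the product of the residuals of the two kernel features at the location `t j`. -/
def residualProduct {DX DZ DY : Type*} {J : ℕ} (kX : DX × DZ → DX × DZ → ℝ) (kY : DY → DY → ℝ)
    (e1 : DX × DZ → DZ → ℝ) (e2 : DY → DZ → ℝ) (t : Fin J → (DX × DZ) × DY)
    (p : (DX × DZ) × DY) : EuclideanSpace ℝ (Fin J) :=
  WithLp.toLp 2 fun j =>
    (kX (t j).1 p.1 - e1 (t j).1 p.1.2) * (kY (t j).2 p.2 - e2 (t j).2 p.1.2)

variable {Ω DX DZ DY : Type*} {J : ℕ} {kX : DX × DZ → DX × DZ → ℝ} {kY : DY → DY → ℝ}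
  {e1 : DX × DZ → DZ → ℝ} {e2 : DY → DZ → ℝ} {t : Fin J → (DX × DZ) × DY}
  {xS : ℕ → Ω → DX} {zS : ℕ → Ω → DZ} {yS : ℕ → Ω → DY}

lemma SStat_eq_empiricalMean (n : ℕ) (ω : Ω) :
    SStat kX kY e1 e2 xS zS yS t n ω = (empiricalMean
      (fun i ω => residualProduct kX kY e1 e2 t ((xS i ω, zS i ω), yS i ω)) n ω).ofLp := by
  ext j
  simp [SStat, uStat, empiricalMean, residualProduct]

lemma covHat_eq_empiricalSecondMoment (n : ℕ) (ω : Ω) :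
    covHat kX kY e1 e2 xS zS yS t n ω = empiricalSecondMoment
      (fun i ω => residualProduct kX kY e1 e2 t ((xS i ω, zS i ω), yS i ω)) n ω := by
  ext j k
  simp [covHat, uStat, empiricalSecondMoment, empiricalMean, residualProduct, Matrix.sum_apply,
    Matrix.vecMulVec_apply]

variable [MeasurableSpace Ω] {μ : Measure Ω}

lemma covMat_eq_secondMoment :
    covMat μ kX kY e1 e2 xS zS yS t = secondMoment μ
      fun ω => residualProduct kX kY e1 e2 t ((xS 0 ω, zS 0 ω), yS 0 ω) :=
  rfl

variable [MeasurableSpace DZ] {X : Ω → DX} {Z : Ω → DZ} {Y : Ω → DY}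

lemma memLp_residualProduct
    (hXL4 : ∀ p, MemLp (fun ω => kX p (X ω, Z ω)) 4 μ) (hYL4 : ∀ q, MemLp (fun ω => kY q (Y ω)) 4 μ)
    (hmean1 : ∀ p, (fun ω => e1 p (Z ω)) =ᵐ[μ]
      μ[fun ω => kX p (X ω, Z ω) | MeasurableSpace.comap Z inferInstance])
    (hmean2 : ∀ q, (fun ω => e2 q (Z ω)) =ᵐ[μ]
      μ[fun ω => kY q (Y ω) | MeasurableSpace.comap Z inferInstance]) :
    MemLp (fun ω => residualProduct kX kY e1 e2 t ((X ω, Z ω), Y ω)) 2 μ := by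
  have h1le4 : (1 : ℝ≥0∞) ≤ 4 := by norm_num
  have : ENNReal.HolderTriple 4 4 2 := by
    rw [ENNReal.holderTriple_iff, ← ENNReal.toReal_eq_toReal_iff' (by simp) (by simp)]
    norm_num [ENNReal.toReal_add]
  exact .of_eval_piLp fun j => (memLp_sub_condExp h1le4 (hYL4 (t j).2) (hmean2 _)).mul
    (memLp_sub_condExp h1le4 (hXL4 (t j).1) (hmean1 _))

variable [MeasurableSpace DX] [MeasurableSpace DY]

lemma measurable_residualProduct (hkX : ∀ p, Measurable (kX p)) (hkY : ∀ q, Measurable (kY q))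
    (he1 : ∀ p, Measurable (e1 p)) (he2 : ∀ q, Measurable (e2 q)) :
    Measurable (residualProduct kX kY e1 e2 t) :=
  (WithLp.measurable_toLp 2 _).comp (measurable_pi_lambda _ fun _ => by fun_prop)

lemma integral_residualProduct_eq_zero [IsFiniteMeasure μ] [StandardBorelSpace Ω]
    [StandardBorelSpace DX] (hX : Measurable X) (hZ : Measurable Z) (hY : Measurable Y)
    (hkX : ∀ p, Measurable (kX p)) (hkY : ∀ q, Measurable (kY q))
    (he1 : ∀ p, Measurable (e1 p)) (he2 : ∀ q, Measurable (e2 q))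
    (hYint : ∀ q, Integrable (fun ω => kY q (Y ω)) μ)
    (hprod_int : Integrable (fun ω => residualProduct kX kY e1 e2 t ((X ω, Z ω), Y ω)) μ)
    (hmean2 : ∀ q, (fun ω => e2 q (Z ω)) =ᵐ[μ]
      μ[fun ω => kY q (Y ω) | MeasurableSpace.comap Z inferInstance])
    (hindep : CondIndepFun (MeasurableSpace.comap Z inferInstance) hZ.comap_le X Y μ) :
    ∫ ω, residualProduct kX kY e1 e2 t ((X ω, Z ω), Y ω) ∂μ = 0 := by
  ext j
  rw [eval_integral_piLp fun j => hprod_int.eval_piLp j]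
  exact integral_residual_mul_residual_eq_zero hX hZ ((hkY (t j).2).comp hY) (hkX _) (he1 _)
    (he2 _) (hYint _) (hprod_int.eval_piLp j) (hmean2 _) (hindep.comp measurable_id (hkY _))

end ResidualProduct

end CIPaper

theorem statement_16_general {Ω DX DZ DY : Type*} [MeasurableSpace Ω] [StandardBorelSpace Ω]
    [MeasurableSpace DX] [StandardBorelSpace DX] [MeasurableSpace DZ] [MeasurableSpace DY]
    (μ : Measure Ω) [IsProbabilityMeasure μ] (X : Ω → DX) (Z : Ω → DZ) (Y : Ω → DY)
    (hX : Measurable X) (hZ : Measurable Z) (hY : Measurable Y) (J : ℕ)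
    (kX : DX × DZ → DX × DZ → ℝ) (kY : DY → DY → ℝ)
    (hkX : ∀ t1, Measurable (kX t1)) (hkY : ∀ t2, Measurable (kY t2))
    (hXL4 : ∀ t1, MemLp (fun ω => kX t1 (X ω, Z ω)) 4 μ)
    (hYL4 : ∀ t2, MemLp (fun ω => kY t2 (Y ω)) 4 μ)
    (e1 : DX × DZ → DZ → ℝ) (e2 : DY → DZ → ℝ)
    (he1m : ∀ t1, Measurable (e1 t1)) (he2m : ∀ t2, Measurable (e2 t2))
    (he1 : ∀ t1, (fun ω => e1 t1 (Z ω)) =ᵐ[μ]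
      μ[fun ω => kX t1 (X ω, Z ω) | MeasurableSpace.comap Z inferInstance])
    (he2 : ∀ t2, (fun ω => e2 t2 (Z ω)) =ᵐ[μ]
      μ[fun ω => kY t2 (Y ω) | MeasurableSpace.comap Z inferInstance])
    (xS : ℕ → Ω → DX) (zS : ℕ → Ω → DZ) (yS : ℕ → Ω → DY)
    (hxS : ∀ i, Measurable (xS i)) (hzS : ∀ i, Measurable (zS i)) (hyS : ∀ i, Measurable (yS i))
    (hiid : iIndepFun (fun i ω => ((xS i ω, zS i ω), yS i ω)) μ)
    (hlaw : ∀ i, μ.map (fun ω => ((xS i ω, zS i ω), yS i ω)) = μ.map fun ω => ((X ω, Z ω), Y ω))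
    (t : Fin J → (DX × DZ) × DY)
    (hH0 : CondIndepFun (MeasurableSpace.comap Z inferInstance) hZ.comap_le X Y μ)
    (hSigmaInv : IsUnit (covMat μ kX kY e1 e2 xS zS yS t))
    (δ : ℕ → ℝ) (hδnonneg : ∀ n, 0 ≤ δ n) (hδ : Tendsto δ atTop (𝓝 0)) :
    CIPaper.TendstoInDistribution μ (fun n ω => n * ∑ j, ((invSqrtMat
      (covHat kX kY e1 e2 xS zS yS t n ω + δ n • (1 : Matrix (Fin J) (Fin J) ℝ))).mulVec
        (SStat kX kY e1 e2 xS zS yS t n ω) j) ^ 2) (chiSq J) := by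
  have hu : Measurable (residualProduct kX kY e1 e2 t) :=
    measurable_residualProduct hkX hkY he1m he2m
  have hidentXZY : ∀ i, IdentDistrib (fun ω => ((xS i ω, zS i ω), yS i ω))
      (fun ω => ((X ω, Z ω), Y ω)) μ μ := fun i =>
    ⟨by fun_prop, by fun_prop, hlaw i⟩
  have hident := fun i => (hidentXZY i).comp hu
  have hL2 : MemLp (fun ω => residualProduct kX kY e1 e2 t ((X ω, Z ω), Y ω)) 2 μ :=
    memLp_residualProduct hXL4 hYL4 he1 he2
  have hmean : ∫ ω, residualProduct kX kY e1 e2 t ((X ω, Z ω), Y ω) ∂μ = 0 :=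
    integral_residualProduct_eq_zero hX hZ hY hkX hkY he1m he2m
      (fun t2 => (hYL4 t2).integrable (by norm_num)) (hL2.integrable one_le_two) he2 hH0
  rw [covMat_eq_secondMoment] at hSigmaInv
  simp only [covHat_eq_empiricalSecondMoment, SStat_eq_empiricalMean]
  exact tendstoInDistribution_chiSq_of_iid ((hident 0).memLp_iff.2 hL2)
    ((hident 0).integral_eq.trans hmean) (hiid.comp _ fun _ => hu)
    (fun i => (hident i).trans (hident 0).symm) hSigmaInv hδnonneg hδ

/-- the normalized oracle statistic converges in law to `χ²(J)` under `H₀`. -/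
theorem statement_16
    (dx dy dz : ℕ) (hdx : 1 ≤ dx) (hdy : 1 ≤ dy) (hdz : 1 ≤ dz)
    {Ω : Type} [MeasurableSpace Ω] [StandardBorelSpace Ω] [Nonempty Ω]
    (μ : Measure Ω) [IsProbabilityMeasure μ]
    (X : Ω → Fin dx → ℝ) (Z : Ω → Fin dz → ℝ) (Y : Ω → Fin dy → ℝ)
    (hX : Measurable X) (hZ : Measurable Z) (hY : Measurable Y)
    (J : ℕ) (hJ : 1 ≤ J)
    (kX : ((Fin dx → ℝ) × (Fin dz → ℝ)) → ((Fin dx → ℝ) × (Fin dz → ℝ)) → ℝ) (kY : (Fin dy → ℝ) → (Fin dy → ℝ) → ℝ)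
    (hk : Assumption1 kX kY)
    (e1 : ((Fin dx → ℝ) × (Fin dz → ℝ)) → (Fin dz → ℝ) → ℝ) (e2 : (Fin dy → ℝ) → (Fin dz → ℝ) → ℝ)
    (he1m : ∀ t1, Measurable (e1 t1)) (he2m : ∀ t2, Measurable (e2 t2))
    (he1 : ∀ t1, (fun ω => e1 t1 (Z ω)) =ᵐ[μ]
      μ[fun ω' => kX t1 (X ω', Z ω') | MeasurableSpace.comap Z inferInstance])
    (he2 : ∀ t2, (fun ω => e2 t2 (Z ω)) =ᵐ[μ]
      μ[fun ω' => kY t2 (Y ω') | MeasurableSpace.comap Z inferInstance])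
    (xS : ℕ → Ω → Fin dx → ℝ) (zS : ℕ → Ω → Fin dz → ℝ) (yS : ℕ → Ω → Fin dy → ℝ)
    (hxS : ∀ i, Measurable (xS i)) (hzS : ∀ i, Measurable (zS i)) (hyS : ∀ i, Measurable (yS i))
    (hiid : iIndepFun (fun i ω => ((xS i ω, zS i ω), yS i ω)) μ)
    (hlaw : ∀ i, μ.map (fun ω => ((xS i ω, zS i ω), yS i ω)) =
      μ.map fun ω => ((X ω, Z ω), Y ω))
    (t : Fin J → (((Fin dx → ℝ) × (Fin dz → ℝ)) × (Fin dy → ℝ)))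
    (hH0 : CondIndepFun (MeasurableSpace.comap Z inferInstance) hZ.comap_le X Y μ)
    (hSigmaInv : IsUnit (covMat μ kX kY e1 e2 xS zS yS t))
    (δ : ℕ → ℝ) (hδpos : ∀ n, 0 < δ n) (hδ : Tendsto δ atTop (𝓝 0)) :
    ∀ f : BoundedContinuousFunction ℝ ℝ,
      Tendsto (fun n : ℕ => ∫ ω, f ((n : ℝ) *
          ∑ j : Fin J, ((invSqrtMat (covHat kX kY e1 e2 xS zS yS t n ω + δ n • (1 : Matrix (Fin J) (Fin J) ℝ))).mulVec
            (SStat kX kY e1 e2 xS zS yS t n ω) j) ^ 2) ∂μ) atTop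
        (𝓝 (∫ x, f x ∂(chiSq J))) := by
  have : Nonempty (Fin dx) := ⟨⟨0, hdx⟩⟩
  have hkX : ∀ t1, Measurable (kX t1) := fun t1 => (hk.continuous_left t1).measurable
  have hkY : ∀ t2, Measurable (kY t2) := fun t2 => (hk.continuous_right t2).measurable
  exact statement_16_general μ X Z Y hX hZ hY J kX kY hkX hkY
    (fun t1 => hk.boundedKernel_left.memLp_comp (hkX t1) (hX.prodMk hZ) 4)
    (fun t2 => hk.boundedKernel_right.memLp_comp (hkY t2) hY 4) e1 e2 he1m he2m he1 he2
    xS zS yS hxS hzS hyS hiid hlaw t hH0 hSigmaInv δ (fun n => (hδpos n).le) hδ
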